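/- Let n ≥ 2k + 1 and let G be a graph on n vertices with no matching of size k + 1. Then the number of edges of G is at most max{ C(2k+1, 2), C(n,2) − k(n−k) } (equivalently, e(G) ≤ max{ k(2k+1), kn − C(k+1,2) }). -/

import Mathlib

/-- `G` has a matching of size `m`: a set of `m` pairwise disjoint edges,
formalized as a subgraph all of whose vertices have a unique neighbor. -/
def hasMatchingOfSize {V : Type*} (G : SimpleGraph V) (m : ℕ) : Prop :=
  ∃ M : SimpleGraph.Subgraph G, M.IsMatching ∧ M.edgeSet.ncard = m

open Finset in
theorem eg_count {V ι : Type*} [Fintype V] [DecidableEq V] [Fintype ι] [DecidableEq ι]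
    (G : SimpleGraph V) [DecidableRel G.Adj] (S : Finset V) (c : V → ι)
    (hsurj : ∀ i, ∃ v, v ∉ S ∧ c v = i)
    (hadj : ∀ u v, u ∉ S → v ∉ S → G.Adj u v → c u = c v) :
    ∃ m, m + S.card + Fintype.card ι = Fintype.card V ∧
      2 * G.edgeFinset.card ≤
        S.card * (Fintype.card V - 1) + (Fintype.card V - S.card) * S.card + (m * m + m) := by
  classical
  let cl : ι → Finset V := fun i => (Sᶜ).filter (fun v => c v = i)
  let a : ι → ℕ := fun i => (cl i).card - 1
  have hcl : ∀ i, (cl i).card = a i + 1 := by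
    intro i
    obtain ⟨v, hv, hc⟩ := hsurj i
    have : 0 < (cl i).card := Finset.card_pos.2 ⟨v, by simp [cl, hv, hc]⟩
    simp only [a]; omega
  have hsum : ∑ i, (cl i).card = Fintype.card V - S.card := by
    rw [← Finset.card_compl, Finset.card_eq_sum_card_fiberwise (f := c) (t := Finset.univ)]
    simp
  have hsum2 : ∑ i, (cl i).card = ∑ i, a i + Fintype.card ι := by
    simp [hcl, Finset.sum_add_distrib]
  have hS := Finset.card_le_univ S
  refine ⟨∑ i, a i, by omega, ?_⟩
  rw [← G.sum_degrees_eq_twice_card_edges, ← Finset.sum_add_sum_compl S, add_assoc]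
  apply Nat.add_le_add
  · rw [← smul_eq_mul]
    apply Finset.sum_le_card_nsmul
    intro v _
    have := G.degree_lt_card_verts v
    omega
  · have h1 : ∀ v ∈ Sᶜ, G.degree v ≤ S.card + a (c v) := by
      intro v hv
      have hsub : G.neighborFinset v ⊆ S ∪ (cl (c v)).erase v := by
        intro w hw
        rw [SimpleGraph.mem_neighborFinset] at hw
        by_cases hwS : w ∈ S
        · simp [hwS]
        · have := hadj v w (by simpa using hv) hwS hw
          simp [cl, hwS, this, hw.ne']
      have h2 := (Finset.card_le_card hsub).trans (Finset.card_union_le _ _)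
      rw [Finset.card_erase_of_mem (by simpa [cl] using hv)] at h2
      simpa [a] using h2
    refine (Finset.sum_le_sum h1).trans ?_
    rw [Finset.sum_add_distrib, Finset.sum_const, Finset.card_compl, smul_eq_mul]
    apply Nat.add_le_add_left
    rw [← Finset.sum_fiberwise_of_maps_to (g := c) (t := Finset.univ) (by simp)]
    have h3 : ∀ i, ∑ v ∈ Sᶜ with c v = i, a (c v) = a i * a i + a i := by
      intro i
      rw [Finset.sum_congr rfl (g := fun _ => a i)]
      · rw [Finset.sum_const, smul_eq_mul]
        change (cl i).card * _ = _
        rw [hcl]; ring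
      · intro v hv
        rw [(Finset.mem_filter.1 hv).2]
    simp only [h3]
    rw [Finset.sum_add_distrib, Finset.sum_mul]
    apply Nat.add_le_add_right
    apply Finset.sum_le_sum
    intro i _
    exact Nat.mul_le_mul_left _ (Finset.single_le_sum (f := a) (by simp) (Finset.mem_univ i))

theorem eg_arith (n k s m e : ℕ) (hnk : 2 * k + 1 ≤ n) (hm : m + 2 * s ≤ 2 * k)
    (h : 2 * e ≤ s * (n - 1) + (n - s) * s + (m * m + m)) :
    e ≤ max (Nat.choose (2 * k + 1) 2) (Nat.choose k 2 + k * (n - k)) := by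
  obtain ⟨t, rfl⟩ : ∃ t, k = s + t := ⟨k - s, by omega⟩
  obtain ⟨d, rfl⟩ : ∃ d, n = 2 * (s + t) + 1 + d := ⟨n - (2 * (s + t) + 1), by omega⟩
  have hm' : m ≤ 2 * t := by omega
  have hmm : m * m + m ≤ 2 * t * (2 * t) + 2 * t := by gcongr
  have e1 : 2 * Nat.choose (2 * (s + t) + 1) 2 = (2 * (s + t) + 1) * (2 * (s + t)) := by
    have := Nat.triangle_succ (2 * (s + t))
    rw [Nat.choose_two_right, Nat.mul_div_cancel' (Nat.even_mul_pred_self _).two_dvd]; simp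
  have e2 : 2 * Nat.choose (s + t) 2 + (s + t) = (s + t) * (s + t) := by
    rw [Nat.choose_two_right, Nat.mul_div_cancel' (Nat.even_mul_pred_self _).two_dvd]
    cases (s + t) with
    | zero => rfl
    | succ r => simp; ring
  have e3 : 2 * (s + t) + 1 + d - (s + t) = s + t + 1 + d := by omega
  have e4 : 2 * (s + t) + 1 + d - 1 = 2 * (s + t) + d := by omega
  have e5 : 2 * (s + t) + 1 + d - s = s + 2 * t + 1 + d := by omega
  rw [e3]
  rw [e4, e5] at h
  rw [le_max_iff]
  by_cases hc : 3 + 5 * (s + t) ≤ 2 * (2 * (s + t) + 1 + d) + 3 * s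
  · right
    nlinarith [Nat.mul_le_mul_left t hc]
  · left
    have hc' : 2 * (2 * (s + t) + 1 + d) ≤ 8 * (s + t) + 3 - 3 * s := by omega
    have hc2 : 2 * (2 * (s + t) + 1 + d) ≤ 5 * s + 8 * t + 3 := by omega
    nlinarith [Nat.mul_le_mul_left s hc2]

theorem eg_submatching {V : Type*} [Fintype V] (G : SimpleGraph V) (M : G.Subgraph)
    (hM : M.IsMatching) (m : ℕ) (hm : m ≤ M.edgeSet.ncard) : hasMatchingOfSize G m := by
  obtain ⟨T, hT, hTm⟩ := Set.exists_subset_card_eq hm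
  refine ⟨{ verts := {v | ∃ w, s(v, w) ∈ T}
            Adj := fun v w => s(v, w) ∈ T
            adj_sub := fun {v w} h => M.adj_sub (hT h)
            edge_vert := fun {v w} h => ⟨w, h⟩
            symm := ⟨fun v w h => by rwa [Sym2.eq_swap]⟩ }, ?_, ?_⟩
  · rintro v ⟨w, hw⟩
    exact ⟨w, hw, fun y hy => hM.eq_of_adj_left (hT hy) (hT hw)⟩
  · rw [← hTm]
    congr 1
    ext e
    induction e with
    | _ x y => simp [SimpleGraph.Subgraph.mem_edgeSet]

theorem eg_verts_le {V : Type*} [Fintype V] (G : SimpleGraph V) (M : G.Subgraph)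
    (hM : M.IsMatching) : M.verts.ncard ≤ 2 * M.edgeSet.ncard := by
  classical
  rw [Set.ncard_eq_toFinset_card', Set.ncard_eq_toFinset_card', mul_comm]
  refine (Finset.card_le_card ?_).trans
    (Finset.card_biUnion_le_card_mul M.edgeSet.toFinset (fun e => e.toFinset) 2 ?_)
  · intro v hv
    obtain ⟨w, hw, _⟩ := hM (by simpa using hv)
    simp only [Finset.mem_biUnion]
    exact ⟨s(v, w), by simpa using hw, by simp⟩
  · intro e _
    rw [Sym2.card_toFinset]
    split_ifs <;> omega

/-- `G` joined with a complete graph on `W`. -/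
def egJoin {V : Type*} (G : SimpleGraph V) (W : Type*) : SimpleGraph (V ⊕ W) where
  Adj x y := x ≠ y ∧ ∀ a b, x = Sum.inl a → y = Sum.inl b → G.Adj a b
  symm := ⟨fun _ _ h => ⟨h.1.symm, fun a b ha hb => (h.2 b a hb ha).symm⟩⟩
  loopless := ⟨fun _ h => h.1 rfl⟩

theorem eg_of_perfect {V : Type*} [Fintype V] (G : SimpleGraph V) (d k : ℕ)
    (hd : d + (2 * k + 2) = Fintype.card V)
    (M : (egJoin G (Fin d)).Subgraph) (hM : M.IsPerfectMatching) :
    hasMatchingOfSize G (k + 1) := by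
  classical
  let M' : G.Subgraph :=
    { verts := {v | ∃ w, M.Adj (Sum.inl v) (Sum.inl w)}
      Adj := fun v w => M.Adj (Sum.inl v) (Sum.inl w)
      adj_sub := fun {v w} h => (M.adj_sub h).2 v w rfl rfl
      edge_vert := fun {v w} h => ⟨w, h⟩
      symm := ⟨fun v w h => h.symm⟩ }
  have hM' : M'.IsMatching := by
    rintro v ⟨w, hw⟩
    exact ⟨w, hw, fun y hy => Sum.inl_injective (hM.1.eq_of_adj_left hy hw)⟩
  apply eg_submatching G M' hM'
  have h1 := eg_verts_le G M' hM'
  have h2 : (M'.verts)ᶜ.ncard ≤ d := by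
    have h3 : ∀ v : V, v ∈ (M'.verts)ᶜ → ∃ x : Fin d, M.Adj (Sum.inl v) (Sum.inr x) := by
      intro v hv
      obtain ⟨w, hw, _⟩ := hM.1 (hM.2 (Sum.inl v))
      rcases w with w | x
      · exact absurd ⟨w, hw⟩ hv
      · exact ⟨x, hw⟩
    choose f hf using h3
    have := Nat.card_le_card_of_injective (fun v : ((M'.verts)ᶜ : Set V) => f v.1 v.2) (by
        intro u v huv
        have h4 := hf u.1 u.2
        have huv' : f u.1 u.2 = f v.1 v.2 := huv
        rw [huv'] at h4
        exact Subtype.ext (Sum.inl_injective (hM.1.eq_of_adj_right h4 (hf v.1 v.2))))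
    rw [Nat.card_coe_set_eq] at this
    simpa using this
  have h5 := Set.ncard_add_ncard_compl M'.verts
  rw [Nat.card_eq_fintype_card] at h5
  omega

theorem eg_violator {V : Type*} [Fintype V] (G : SimpleGraph V) (d k : ℕ)
    (hd : d + (2 * k + 2) = Fintype.card V)
    (U : Set (V ⊕ Fin d)) (hU : (egJoin G (Fin d)).IsTutteViolator U) :
    G.edgeSet.ncard ≤ max (Nat.choose (2 * k + 1) 2)
      (Nat.choose k 2 + k * (Fintype.card V - k)) := by
  classical
  unfold SimpleGraph.IsTutteViolator at hU
  set K := ((⊤ : (egJoin G (Fin d)).Subgraph).deleteVerts U).coe with hK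
  have hKadj : ∀ x y, K.Adj x y ↔ (egJoin G (Fin d)).Adj x.1 y.1 := by
    intro x y
    have hx := x.2
    have hy := y.2
    simp only [SimpleGraph.Subgraph.deleteVerts_verts, Set.mem_sdiff] at hx hy
    simp [hK, SimpleGraph.Subgraph.deleteVerts_adj, hx.2, hy.2]
  have hpar := SimpleGraph.odd_ncard_oddComponents K
  have hcard : Nat.card ((⊤ : (egJoin G (Fin d)).Subgraph).deleteVerts U).verts + U.ncard
      = Fintype.card V + d := by
    have h5 := Set.ncard_add_ncard_compl U
    rw [Nat.card_eq_fintype_card, Fintype.card_sum, Fintype.card_fin] at h5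
    rw [Nat.card_coe_set_eq, SimpleGraph.Subgraph.deleteVerts_verts,
      SimpleGraph.Subgraph.verts_top, ← Set.compl_eq_univ_sdiff]
    omega
  have hq : U.ncard + 2 ≤ K.oddComponents.ncard := by
    rw [Nat.odd_iff, Nat.odd_iff] at hpar
    omega
  have hqall : K.oddComponents.ncard ≤ Fintype.card K.ConnectedComponent := by
    rw [← Nat.card_eq_fintype_card]; exact Set.ncard_le_card _
  have hmem : ∀ x, x ∈ ((⊤ : (egJoin G (Fin d)).Subgraph).deleteVerts U).verts ↔ x ∉ U := by
    intro x; simp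
  by_cases hall : ∀ x : Fin d, Sum.inr x ∈ U
  · let S : Finset V := Finset.univ.filter (fun v => Sum.inl v ∈ U)
    have hUS : U.ncard = S.card + d := by
      have : U = ((S.disjSum (Finset.univ : Finset (Fin d)) : Finset (V ⊕ Fin d)) :
          Set (V ⊕ Fin d)) := by
        ext x
        rcases x with v | x
        · simp [S]
        · simp [hall]
      rw [this, Set.ncard_coe_finset, Finset.card_disjSum]
      simp
    have hne : Nonempty K.ConnectedComponent := by
      apply Fintype.card_pos_iff.1; omega
    let c : V → K.ConnectedComponent := fun v =>
      if h : Sum.inl v ∈ U then hne.some else K.connectedComponentMk ⟨Sum.inl v, (hmem _).2 h⟩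
    obtain ⟨m, hm1, hm2⟩ := eg_count G S c (by
      intro i
      induction i using SimpleGraph.ConnectedComponent.ind with
      | _ x =>
        obtain ⟨x, hx⟩ := x
        rcases x with v | x
        · have hv := (hmem _).1 hx
          exact ⟨v, by simpa [S] using hv, by simp [c, hv]⟩
        · exact absurd (hall x) ((hmem _).1 hx)) (by
      intro u v hu hv huv
      have hu' : Sum.inl u ∉ U := by simpa [S] using hu
      have hv' : Sum.inl v ∉ U := by simpa [S] using hv
      simp only [c, hu', hv', dif_neg, not_false_eq_true]
      rw [SimpleGraph.ConnectedComponent.eq]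
      apply SimpleGraph.Adj.reachable
      rw [hKadj]
      refine ⟨fun h => huv.ne (Sum.inl_injective h), fun a b ha hb => ?_⟩
      cases ha; cases hb; exact huv)
    rw [Set.ncard_eq_toFinset_card']
    exact eg_arith _ k S.card m _ (by omega) (by omega) hm2
  · push Not at hall
    obtain ⟨x, hx⟩ := hall
    exfalso
    have : Fintype.card K.ConnectedComponent ≤ 1 := by
      rw [Fintype.card_le_one_iff_subsingleton]
      have key : ∀ y, K.connectedComponentMk y = K.connectedComponentMk ⟨Sum.inr x, (hmem _).2 hx⟩ := by
        intro y
        by_cases hy : y = ⟨Sum.inr x, (hmem _).2 hx⟩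
        · rw [hy]
        · rw [SimpleGraph.ConnectedComponent.eq]
          apply SimpleGraph.Adj.reachable
          rw [hKadj]
          exact ⟨fun h => hy (Subtype.ext h), fun a b _ hb => by cases hb⟩
      constructor
      intro p q
      induction p using SimpleGraph.ConnectedComponent.ind
      induction q using SimpleGraph.ConnectedComponent.ind
      rw [key, ← key]
    omega

/-- Erdős–Gallai theorem on matchings: if `n ≥ 2k + 1` and `G` has no matching of
size `k + 1`, then `e(G) ≤ max { C(2k+1, 2), C(k,2) + k(n−k) }`
(note `C(n,2) − k(n−k) = C(k,2) + k(n−k)`). -/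
theorem stmt_8 {V : Type*} [Fintype V] (G : SimpleGraph V) (n k : ℕ)
    (hn : Fintype.card V = n) (hnk : 2 * k + 1 ≤ n)
    (h : ¬ hasMatchingOfSize G (k + 1)) :
    G.edgeSet.ncard ≤ max (Nat.choose (2 * k + 1) 2) (Nat.choose k 2 + k * (n - k)) := by
  classical
  subst hn
  rcases Nat.eq_or_lt_of_le hnk with h1 | h1
  · apply le_max_of_le_left
    rw [h1, Set.ncard_eq_toFinset_card']
    exact SimpleGraph.card_edgeFinset_le_card_choose_two
  · obtain ⟨d, hd⟩ : ∃ d, d + (2 * k + 2) = Fintype.card V :=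
      ⟨Fintype.card V - (2 * k + 2), by omega⟩
    by_contra hcon
    obtain ⟨M, hM⟩ := (SimpleGraph.tutte (G := egJoin G (Fin d))).2
      (fun U hU => hcon (eg_violator G d k hd U hU))
    exact h (eg_of_perfect G d k hd M hM)
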